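/- arXiv:2312.14707 — 2 statements merged into one kernel-verified Lean document; each statement's English description precedes it below -/
import Mathlib

section
/- The even-dimensional sphere S^{2n} (for n ≥ 1) does not admit an almost para-complex structure; equivalently, its tangent bundle cannot be written as a Whitney sum of two rank-n subbundles. -/
open Bundle Module Manifold

open Polynomial in
theorem even_of_eval_sq_eq_mul_one_add_sq_pow {q : ℝ[X]} {c : ℝ} (hc : c ≠ 0) {m : ℕ} {s : Set ℝ}
    (hs : s.Infinite) (h : ∀ t ∈ s, q.eval t ^ 2 = c * (1 + t ^ 2) ^ m) : Even m := by
  have hq : q ^ 2 = C c * (1 + X ^ 2) ^ m :=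
    eq_of_infinite_eval_eq _ _ <| hs.mono fun t ht ↦ by simpa using h t ht
  have hQ : (q.map (algebraMap ℝ ℂ)) ^ 2 =
      C (c : ℂ) * ((X - C Complex.I) ^ m * (X - C (-Complex.I)) ^ m) := by
    rw [← Polynomial.map_pow, hq, ← mul_pow]
    have : (X - C Complex.I) * (X - C (-Complex.I)) = 1 + X ^ 2 := by
      have h2 : (C Complex.I : ℂ[X]) * C Complex.I = -1 := by
        rw [← C_mul, Complex.I_mul_I]; simp
      rw [C_neg]
      linear_combination (-1 : ℂ[X]) * h2
    rw [this]
    simp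
  have hc' : (C (c : ℂ) : ℂ[X]) ≠ 0 := by simpa using hc
  have hne (a : ℂ) : (X - C a) ^ m ≠ 0 := pow_ne_zero _ (X_sub_C_ne_zero a)
  have hI : ¬ ((X - C (-Complex.I)) ^ m).IsRoot Complex.I := by
    simp [IsRoot, ← two_mul]
  have hq0 : (q.map (algebraMap ℝ ℂ)) * (q.map (algebraMap ℝ ℂ)) ≠ 0 := by
    rw [← sq, hQ]
    exact mul_ne_zero hc' (mul_ne_zero (hne _) (hne _))
  have h1 := congrArg (rootMultiplicity Complex.I) hQ
  rw [rootMultiplicity_mul (mul_ne_zero hc' (mul_ne_zero (hne _) (hne _))),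
    rootMultiplicity_mul (mul_ne_zero (hne _) (hne _)), rootMultiplicity_C,
    rootMultiplicity_X_sub_C_pow, sq, rootMultiplicity_mul hq0,
    rootMultiplicity_eq_zero hI] at h1
  exact ⟨rootMultiplicity Complex.I (q.map (algebraMap ℝ ℂ)), by omega⟩

section

variable {E : Type*} [NormedAddCommGroup E] [InnerProductSpace ℝ E]

theorem exists_pos_forall_det_id_add_pos :
    ∃ ε > 0, ∀ B : E →L[ℝ] E, ‖B‖ < ε → 0 < (ContinuousLinearMap.id ℝ E + B).det := by
  have h : ContinuousAt (fun B : E →L[ℝ] E ↦ (ContinuousLinearMap.id ℝ E + B).det) 0 :=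
    (ContinuousLinearMap.continuous_det.comp (continuous_const.add continuous_id)).continuousAt
  have h1 : (0 : ℝ) < (ContinuousLinearMap.id ℝ E + (0 : E →L[ℝ] E)).det := by
    simp [ContinuousLinearMap.det]
  obtain ⟨ε, hε, H⟩ := Metric.eventually_nhds_iff.1 (h.eventually_const_lt h1)
  exact ⟨ε, hε, fun B hB ↦ H (by simpa using hB)⟩

open Metric in
/-- The positively homogeneous extension of a Lipschitz map from the sphere to itself is
Lipschitz. -/
theorem lipschitzWith_norm_smul_of_lipschitzOnWith_sphere {N : E → E} {L : NNReal}
    (hL : LipschitzOnWith L N (sphere 0 1)) (hN : ∀ x ∈ sphere (0 : E) 1, ‖N x‖ = 1) :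
    LipschitzWith (1 + 2 * L) fun x ↦ ‖x‖ • N (‖x‖⁻¹ • x) := by
  have hmem {x : E} (hx : x ≠ 0) : ‖x‖⁻¹ • x ∈ sphere (0 : E) 1 := by
    simp [norm_smul, norm_ne_zero_iff.2 hx]
  refine LipschitzWith.of_dist_le_mul fun x y ↦ ?_
  simp only [dist_eq_norm, NNReal.coe_add, NNReal.coe_one, NNReal.coe_mul, NNReal.coe_ofNat]
  have hL0 := L.coe_nonneg
  rcases eq_or_ne x 0 with rfl | hx
  · rcases eq_or_ne y 0 with rfl | hy
    · simp
    · simp only [norm_zero, zero_smul, zero_sub, norm_neg, norm_smul, norm_norm, hN _ (hmem hy)]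
      nlinarith [norm_nonneg y]
  rcases eq_or_ne y 0 with rfl | hy
  · simp only [norm_zero, zero_smul, sub_zero, norm_smul, norm_norm, hN _ (hmem hx)]
    nlinarith [norm_nonneg x]
  have h1 : ‖y‖ * ‖‖x‖⁻¹ • x - ‖y‖⁻¹ • y‖ ≤ 2 * ‖x - y‖ := by
    have : ‖y‖ * ‖‖x‖⁻¹ • x - ‖y‖⁻¹ • y‖ = ‖(‖y‖ - ‖x‖) • (‖x‖⁻¹ • x) + (x - y)‖ := by
      rw [← norm_norm y, ← norm_smul, norm_norm, smul_sub, sub_smul,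
        smul_inv_smul₀ (norm_ne_zero_iff.2 hx), smul_inv_smul₀ (norm_ne_zero_iff.2 hy)]
      congr 1
      abel
    rw [this, two_mul]
    refine (norm_add_le _ _).trans (add_le_add_left ?_ _)
    rw [norm_smul, mem_sphere_zero_iff_norm.1 (hmem hx), mul_one, norm_sub_rev x]
    exact abs_norm_sub_norm_le y x
  have h2 := hL.norm_sub_le (hmem hx) (hmem hy)
  calc ‖‖x‖ • N (‖x‖⁻¹ • x) - ‖y‖ • N (‖y‖⁻¹ • y)‖
      = ‖(‖x‖ - ‖y‖) • N (‖x‖⁻¹ • x) + ‖y‖ • (N (‖x‖⁻¹ • x) - N (‖y‖⁻¹ • y))‖ := by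
        congr 1; module
    _ ≤ |‖x‖ - ‖y‖| * 1 + ‖y‖ * (L * ‖‖x‖⁻¹ • x - ‖y‖⁻¹ • y‖) := by
        refine (norm_add_le _ _).trans ?_
        rw [norm_smul, norm_smul, norm_norm, hN _ (hmem hx), Real.norm_eq_abs]
        gcongr
    _ ≤ (1 + 2 * L) * ‖x - y‖ := by
        nlinarith [abs_norm_sub_norm_le x y]

variable [FiniteDimensional ℝ E]

open Polynomial in
theorem exists_polynomial_eval_eq_det_id_add_smul (A : E →L[ℝ] E) :
    ∃ p : ℝ[X], p.natDegree ≤ finrank ℝ E ∧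
      ∀ t : ℝ, p.eval t = (ContinuousLinearMap.id ℝ E + t • A).det := by
  let b := finBasis ℝ E
  refine ⟨_, (natDegree_det_X_add_C_le (LinearMap.toMatrix b b (A : E →ₗ[ℝ] E)) 1).trans_eq
    (Fintype.card_fin _), fun t ↦ ?_⟩
  rw [ContinuousLinearMap.det, ← LinearMap.det_toMatrix b, ← coe_evalRingHom, RingHom.map_det]
  congr 1
  ext i j
  simp [Matrix.one_apply, LinearMap.toMatrix_apply, Finsupp.single_apply, eq_comm,
    apply_ite (eval t), add_comm]
  exact mul_comm _ _

/-- If `F x t` is, for every `x`, a polynomial in `t` of bounded degree, so is its integral. -/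
theorem exists_polynomial_eval_eq_integral {α : Type*} [MeasurableSpace α]
    {μ : MeasureTheory.Measure α} {F : α → ℝ → ℝ} {d : ℕ}
    (hF : ∀ t, MeasureTheory.Integrable (fun x ↦ F x t) μ)
    (hp : ∀ x, ∃ p : Polynomial ℝ, p.natDegree ≤ d ∧ ∀ t, p.eval t = F x t) :
    ∃ q : Polynomial ℝ, ∀ t, q.eval t = ∫ x, F x t ∂μ := by
  let s := Finset.range (d + 1)
  let v : ℕ → ℝ := fun i ↦ i
  refine ⟨Lagrange.interpolate s v fun i ↦ ∫ x, F x (v i) ∂μ, fun t ↦ ?_⟩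
  have key (x : α) : F x t = ∑ i ∈ s, F x (v i) * (Lagrange.basis s v i).eval t := by
    obtain ⟨p, hd, hp⟩ := hp x
    have := Lagrange.eq_interpolate_of_eval_eq (s := s) (v := v) (f := p) (fun i ↦ F x (v i))
      (fun i _ j _ h ↦ by simpa [v] using h)
      ((Polynomial.degree_le_of_natDegree_le hd).trans_lt (by simp [s]; norm_cast; omega))
      (fun i _ ↦ hp _)
    rw [← hp, this, Lagrange.interpolate_apply, Polynomial.eval_finsetSum]
    simp
  simp_rw [key]
  rw [MeasureTheory.integral_finsetSum _ fun i _ ↦ (hF _).mul_const _,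
    Lagrange.interpolate_apply, Polynomial.eval_finsetSum]
  simp [MeasureTheory.integral_mul_const]

open MeasureTheory Metric Pointwise in
/-- For small `t`, the map `x ↦ x + t • w x` sends the ball of radius `1` onto the ball of radius
`√(1 + t ^ 2)`, and the integral of its Jacobian is the volume of the latter. -/
theorem integral_det_id_add_smul_fderiv [MeasurableSpace E] [BorelSpace E] (μ : Measure E)
    [μ.IsAddHaarMeasure] {w : E → E} {K : NNReal} (hK : LipschitzWith K w)
    (hd : ∀ x ≠ 0, DifferentiableAt ℝ w x) (hn : ∀ x, ‖w x‖ = ‖x‖)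
    (ho : ∀ x, inner ℝ (w x) x = 0) {t : ℝ} (ht : 0 ≤ t) (htK : t * K < 1)
    (hpos : ∀ x, 0 < (ContinuousLinearMap.id ℝ E + t • fderiv ℝ w x).det) :
    ∫ x in ball 0 1 \ {0}, (ContinuousLinearMap.id ℝ E + t • fderiv ℝ w x).det ∂μ =
      √(1 + t ^ 2) ^ finrank ℝ E * μ.real (ball 0 1 \ {0}) := by
  let f : E → E := fun x ↦ x + t • w x
  have hr : 0 < √(1 + t ^ 2) := by positivity
  have hnf (x : E) : ‖f x‖ = √(1 + t ^ 2) * ‖x‖ := by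
    rw [← Real.sqrt_sq (norm_nonneg x), ← Real.sqrt_mul (by positivity), eq_comm,
      Real.sqrt_eq_iff_mul_self_eq (by positivity) (by positivity), ← sq, norm_add_sq_real,
      real_inner_comm, inner_smul_left, ho, norm_smul, mul_pow, hn]
    simp
    ring
  have happ : ApproximatesLinearOn f (ContinuousLinearEquiv.refl ℝ E : E →L[ℝ] E) Set.univ
      (t.toNNReal * K) := by
    intro x _ y _
    have : f x - f y - (ContinuousLinearEquiv.refl ℝ E : E →L[ℝ] E) (x - y) = t • (w x - w y) := by
      simp [f, smul_sub]; abel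
    rw [this, norm_smul, Real.norm_of_nonneg ht, NNReal.coe_mul, Real.coe_toNNReal _ ht, mul_assoc]
    gcongr
    exact hK.norm_sub_le x y
  have hc : Subsingleton E ∨
      t.toNNReal * K < ‖((ContinuousLinearEquiv.refl ℝ E).symm : E →L[ℝ] E)‖₊⁻¹ := by
    rcases subsingleton_or_nontrivial E with h | h
    · exact .inl h
    right
    have h1 : ‖((ContinuousLinearEquiv.refl ℝ E).symm : E →L[ℝ] E)‖₊ = 1 :=
      NNReal.eq ContinuousLinearMap.norm_id
    rw [h1]
    simpa [← NNReal.coe_lt_coe, ht] using htK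
  have hinj : Set.InjOn f (ball 0 1 \ {0}) := (happ.injOn hc).mono (Set.subset_univ _)
  have himg : f '' (ball 0 1 \ {0}) = √(1 + t ^ 2) • (ball (0 : E) 1 \ {0}) := by
    ext y
    obtain ⟨x, rfl⟩ := happ.surjective hc y
    have hinj' : Function.Injective f := Set.injOn_univ.1 (happ.injOn hc)
    rw [hinj'.mem_set_image, Set.mem_smul_set_iff_inv_smul_mem₀ hr.ne']
    have h0 : f x = 0 ↔ x = 0 := by
      rw [← norm_eq_zero, hnf, mul_eq_zero, or_iff_right hr.ne', norm_eq_zero]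
    simp [norm_smul, hnf, h0, hr.ne', abs_of_pos hr]
  have hmeas : MeasurableSet (ball (0 : E) 1 \ {0}) :=
    measurableSet_ball.diff (measurableSet_singleton 0)
  have hder : ∀ x ∈ ball (0 : E) 1 \ {0}, HasFDerivWithinAt f
      (ContinuousLinearMap.id ℝ E + t • fderiv ℝ w x) (ball 0 1 \ {0}) x := fun x hx ↦
    ((hasFDerivAt_id x).add ((hd x hx.2).hasFDerivAt.const_smul t)).hasFDerivWithinAt
  have := integral_image_eq_integral_abs_det_fderiv_smul μ hmeas hder hinj (fun _ ↦ (1 : ℝ))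
  simp only [abs_of_pos (hpos _), smul_eq_mul, mul_one] at this
  rw [← this, himg, setIntegral_const, measureReal_def, Measure.addHaar_smul, ENNReal.toReal_mul,
    abs_of_pos (by positivity), ENNReal.toReal_ofReal (by positivity), measureReal_def, smul_eq_mul,
    mul_one]

open MeasureTheory Metric in
/-- A Lipschitz vector field on `E` which is orthogonal to the position vector and of the same
length can only exist in even dimensions. -/
theorem even_finrank_of_lipschitzWith [Nontrivial E] {w : E → E} {K : NNReal}
    (hK : LipschitzWith K w) (hd : ∀ x ≠ 0, DifferentiableAt ℝ w x)
    (hn : ∀ x, ‖w x‖ = ‖x‖) (ho : ∀ x, inner ℝ (w x) x = 0) : Even (finrank ℝ E) := by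
  borelize E
  let μ : Measure E := Measure.addHaar
  let s : Set E := ball 0 1 \ {0}
  have hs : μ s ≠ ⊤ := (measure_mono Set.sdiff_subset).trans_lt measure_ball_lt_top |>.ne
  have hbd (x : E) : ‖fderiv ℝ w x‖ ≤ K := norm_fderiv_le_of_lipschitz ℝ hK
  have hint (t : ℝ) : Integrable
      (fun x ↦ (ContinuousLinearMap.id ℝ E + t • fderiv ℝ w x).det) (μ.restrict s) := by
    have hcont : Continuous fun B : E →L[ℝ] E ↦ (ContinuousLinearMap.id ℝ E + t • B).det :=
      ContinuousLinearMap.continuous_det.comp (by fun_prop)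
    obtain ⟨C, hC⟩ := (isCompact_closedBall (0 : E →L[ℝ] E) K).exists_bound_of_continuousOn
      hcont.continuousOn
    refine Measure.integrableOn_of_bounded (M := C) hs ?_ ?_
    · exact (hcont.measurable.comp (measurable_fderiv ℝ w)).aestronglyMeasurable
    · exact ae_of_all _ fun x ↦ hC _ (by simpa using hbd x)
  obtain ⟨q, hq⟩ := exists_polynomial_eval_eq_integral hint
    fun x ↦ exists_polynomial_eval_eq_det_id_add_smul (fderiv ℝ w x)
  obtain ⟨ε, hε, hdet⟩ := exists_pos_forall_det_id_add_pos (E := E)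
  have hμ : μ.real s ≠ 0 := by
    rw [measureReal_def, ENNReal.toReal_ne_zero]
    refine ⟨?_, hs⟩
    rw [measure_sdiff_null (measure_singleton 0)]
    exact (measure_ball_pos μ 0 one_pos).ne'
  let δ : ℝ := min ε 1 / (K + 1)
  have hδ : 0 < δ := by positivity
  refine even_of_eval_sq_eq_mul_one_add_sq_pow (q := q) (c := μ.real s ^ 2) (pow_ne_zero 2 hμ)
    (Set.Ioo_infinite hδ) fun t ht ↦ ?_
  have htK : t * K < min ε 1 := by
    have := (lt_div_iff₀ (by positivity)).1 ht.2
    nlinarith [ht.1]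
  have hpos (x : E) : 0 < (ContinuousLinearMap.id ℝ E + t • fderiv ℝ w x).det := by
    refine hdet _ (lt_of_le_of_lt ?_ (htK.trans_le (min_le_left _ _)))
    rw [norm_smul, Real.norm_of_nonneg ht.1.le]
    exact mul_le_mul_of_nonneg_left (hbd x) ht.1.le
  rw [hq, integral_det_id_add_smul_fderiv μ hK hd hn ho ht.1.le
    (htK.trans_le (min_le_right _ _)) hpos, mul_pow, ← pow_mul, mul_comm _ 2, pow_mul,
    Real.sq_sqrt (by positivity), mul_comm]

open Metric in
/-- The **hairy ball theorem**: a continuous tangent vector field on the unit sphere of an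
odd-dimensional Euclidean space vanishes somewhere. -/
theorem exists_eq_zero_of_odd_finrank (hodd : Odd (finrank ℝ E)) {v : sphere (0 : E) 1 → E}
    (hv : Continuous v) (ho : ∀ x, inner ℝ (v x) (x : E) = 0) : ∃ x, v x = 0 := by
  by_contra! hne
  have : Nontrivial E := nontrivial_of_finrank_pos hodd.pos
  obtain ⟨x₀, hx₀⟩ := NormedSpace.sphere_nonempty (x := (0 : E)).2 zero_le_one
  obtain ⟨z, -, hz⟩ := isCompact_univ.exists_isMinOn (s := (Set.univ : Set (sphere (0 : E) 1)))
    ⟨⟨x₀, hx₀⟩, trivial⟩ hv.norm.continuousOn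
  obtain ⟨g, hg⟩ := ContinuousMap.exists_restrict_eq (Y := E)
    (isClosed_sphere (x := (0 : E)) (ε := 1)) ⟨v, hv⟩
  obtain ⟨h, hh, hhg, -⟩ := g.continuous.exists_contDiff_approx 1 continuous_const
    (fun _ ↦ norm_pos_iff.2 (hne z))
  let u : E → E := fun y ↦ h y - inner ℝ (h y) y • y
  have hu : ContDiff ℝ 1 u := hh.sub ((hh.inner ℝ contDiff_id).smul contDiff_id)
  have hu0 : ∀ x ∈ sphere (0 : E) 1, u x ≠ 0 := by
    intro x hx hux
    have hgx : g x = v ⟨x, hx⟩ := DFunLike.congr_fun hg ⟨x, hx⟩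
    have h1 : inner ℝ (v ⟨x, hx⟩) (h x) = 0 := by
      rw [sub_eq_zero.1 hux, inner_smul_right, ho ⟨x, hx⟩, mul_zero]
    have h2 : ‖v ⟨x, hx⟩‖ * ‖v ⟨x, hx⟩‖ ≤ ‖v ⟨x, hx⟩‖ * ‖v ⟨x, hx⟩ - h x‖ := by
      rw [← real_inner_self_eq_norm_mul_norm]
      simpa [inner_sub_right, h1] using real_inner_le_norm (v ⟨x, hx⟩) (v ⟨x, hx⟩ - h x)
    have h3 := hhg x
    rw [hgx, dist_comm, dist_eq_norm] at h3
    exact (le_of_mul_le_mul_left h2 (norm_pos_iff.2 (hne _))).not_gt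
      (h3.trans_le (hz (Set.mem_univ (⟨x, hx⟩ : sphere (0 : E) 1))))
  let N : E → E := fun y ↦ ‖u y‖⁻¹ • u y
  have hN : ∀ x ∈ sphere (0 : E) 1, ContDiffAt ℝ 1 N x := fun x hx ↦
    ((hu.contDiffAt.norm ℝ (hu0 x hx)).inv (norm_ne_zero_iff.2 (hu0 x hx))).smul hu.contDiffAt
  have hN1 : ∀ x ∈ sphere (0 : E) 1, ‖N x‖ = 1 := fun x hx ↦ by
    simp [N, norm_smul, norm_ne_zero_iff.2 (hu0 x hx)]
  have hNo : ∀ x ∈ sphere (0 : E) 1, inner ℝ (N x) x = 0 := fun x hx ↦ by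
    have : inner ℝ x x = (1 : ℝ) := by
      rw [real_inner_self_eq_norm_sq, mem_sphere_zero_iff_norm.1 hx, one_pow]
    simp only [N, u, inner_smul_left, inner_sub_left, this]
    simp
  obtain ⟨L, hL⟩ := LocallyLipschitzOn.exists_lipschitzOnWith_of_compact (f := N)
    (isCompact_sphere (0 : E) 1) <| by
      intro x hx
      obtain ⟨K, t, ht, hK⟩ := (hN x hx).exists_lipschitzOnWith
      exact ⟨K, t, mem_nhdsWithin_of_mem_nhds ht, hK⟩
  have hmem {x : E} (hx : x ≠ 0) : ‖x‖⁻¹ • x ∈ sphere (0 : E) 1 := by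
    simp [norm_smul, norm_ne_zero_iff.2 hx]
  refine (Nat.not_even_iff_odd.2 hodd) (even_finrank_of_lipschitzWith
    (lipschitzWith_norm_smul_of_lipschitzOnWith_sphere hL hN1) (fun x hx ↦ ?_)
    (fun x ↦ ?_) fun x ↦ ?_)
  · have hn : DifferentiableAt ℝ (fun x : E ↦ ‖x‖) x := differentiableAt_id.norm ℝ hx
    have h1 : DifferentiableAt ℝ (fun x : E ↦ ‖x‖⁻¹ • x) x :=
      (hn.inv (norm_ne_zero_iff.2 hx)).smul differentiableAt_id
    exact hn.smul (((hN _ (hmem hx)).differentiableAt one_ne_zero).comp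
      (f := fun x : E ↦ ‖x‖⁻¹ • x) x h1)
  · rcases eq_or_ne x 0 with rfl | hx
    · simp
    · simp [norm_smul, hN1 _ (hmem hx)]
  · rcases eq_or_ne x 0 with rfl | hx
    · simp
    · have := hNo _ (hmem hx)
      rw [inner_smul_right] at this
      rw [inner_smul_left, (mul_eq_zero.1 this).resolve_left
        (inv_ne_zero (norm_ne_zero_iff.2 hx)), mul_zero]

end

open unitInterval in
/-- A nonzero vector in the range of an idempotent can be transported along a homotopy of families
of idempotents over a compact space. -/
theorem exists_continuous_fixed_of_homotopy {X F : Type*} [PseudoMetricSpace X] [CompactSpace X]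
    [NormedAddCommGroup F] [NormedSpace ℝ F] {H : X × I → F →L[ℝ] F} (hH : Continuous H)
    (hid : ∀ p v, H p (H p v) = H p v) {u : F} (hu : u ≠ 0) (hu0 : ∀ x, H (x, 0) u = u) :
    ∃ s : X → F, Continuous s ∧ ∀ x, H (x, 1) (s x) = s x ∧ s x ≠ 0 := by
  obtain ⟨δ, hδ, hHδ⟩ := Metric.uniformContinuous_iff.1
    (CompactSpace.uniformContinuous_of_continuous hH) 1 one_pos
  obtain ⟨k, hk⟩ := exists_nat_one_div_lt hδ
  let τ : ℕ → I := fun i ↦ Set.projIcc 0 1 zero_le_one (i / (k + 1))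
  have hτ (i : ℕ) : dist (τ (i + 1)) (τ i) < δ := by
    refine lt_of_le_of_lt ?_ hk
    refine ((LipschitzWith.projIcc (zero_le_one (α := ℝ))).dist_le_mul _ _).trans_eq ?_
    rw [Real.dist_eq, Nat.cast_add, Nat.cast_one, add_div, add_sub_cancel_left,
      abs_of_pos (by positivity), NNReal.coe_one, one_mul]
  have key (i : ℕ) : ∃ s : X → F, Continuous s ∧ ∀ x, H (x, τ i) (s x) = s x ∧ s x ≠ 0 := by
    induction i with
    | zero => exact ⟨fun _ ↦ u, continuous_const, fun x ↦ ⟨by simpa [τ] using hu0 x, hu⟩⟩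
    | succ i ih =>
      obtain ⟨s, hs, h⟩ := ih
      refine ⟨fun x ↦ H (x, τ (i + 1)) (s x), (hH.comp (by fun_prop)).clm_apply hs,
        fun x ↦ ⟨hid _ _, fun h0 ↦ ?_⟩⟩
      have h1 : s x = (H (x, τ i) - H (x, τ (i + 1))) (s x) := by
        simp [(h x).1, h0]
      have h2 : ‖H (x, τ i) - H (x, τ (i + 1))‖ < 1 := by
        rw [← dist_eq_norm, dist_comm]
        exact hHδ (by simpa [Prod.dist_eq, hδ] using hτ i)
      have h3 := (H (x, τ i) - H (x, τ (i + 1))).le_opNorm (s x)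
      rw [← h1] at h3
      nlinarith [norm_pos_iff.2 (h x).2]
  have h1 : τ (k + 1) = 1 := by
    simp only [τ, Nat.cast_add, Nat.cast_one]
    rw [div_self (by positivity)]
    exact Set.projIcc_right _
  simpa [h1] using key (k + 1)

section

variable {E : Type*} [NormedAddCommGroup E] [InnerProductSpace ℝ E] [FiniteDimensional ℝ E]

open Metric unitInterval in
/-- A continuous family of projections over the sphere which is nonzero at `p` has a continuous
section of its ranges without zeros on the hemisphere centred at `p`. -/
theorem exists_continuous_fixed_ne_zero_on_hemisphere {P : sphere (0 : E) 1 → E →L[ℝ] E}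
    (hP : Continuous P) (hid : ∀ x v, P x (P x v) = P x v) {p : sphere (0 : E) 1} (hp : P p ≠ 0) :
    ∃ s : sphere (0 : E) 1 → E, Continuous s ∧ (∀ x, P x (s x) = s x) ∧
      ∀ x : sphere (0 : E) 1, 0 ≤ inner ℝ (x : E) (p : E) → s x ≠ 0 := by
  let κ : sphere (0 : E) 1 → E := fun x ↦
    x + (|inner ℝ (x : E) (p : E)| - inner ℝ (x : E) (p : E)) • (p : E)
  let y : sphere (0 : E) 1 × I → E := fun z ↦ (1 - z.2 : ℝ) • (p : E) + (z.2 : ℝ) • κ z.1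
  have hpp : inner ℝ (p : E) (p : E) = (1 : ℝ) := by
    rw [real_inner_self_eq_norm_sq, mem_sphere_zero_iff_norm.1 p.2, one_pow]
  have hy0 (z) : y z ≠ 0 := fun h ↦ by
    obtain ⟨x, t, ht0, ht1⟩ := z
    have h1 : inner ℝ (y (x, ⟨t, ht0, ht1⟩)) (p : E) = (1 - t) + t * |inner ℝ (x : E) (p : E)| := by
      simp only [y, κ, inner_add_left, real_inner_smul_left, hpp]
      ring
    rw [h, inner_zero_left] at h1
    have h2 : 0 ≤ t * |inner ℝ (x : E) (p : E)| := by positivity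
    have h3 : t = 1 := by linarith
    have h4 : inner ℝ (x : E) (p : E) = (0 : ℝ) := by
      subst h3
      simpa using h1.symm
    subst h3
    simp only [y, κ, h4] at h
    exact ne_zero_of_mem_unit_sphere x (by simpa using h)
  have hyc : Continuous y := by
    have hi : Continuous fun z : sphere (0 : E) 1 × I ↦ inner ℝ (z.1 : E) (p : E) := by fun_prop
    fun_prop
  let γ : sphere (0 : E) 1 × I → sphere (0 : E) 1 := fun z ↦
    ⟨‖y z‖⁻¹ • y z, by simp [norm_smul, norm_ne_zero_iff.2 (hy0 z)]⟩
  have hγ : Continuous γ :=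
    ((hyc.norm.inv₀ fun z ↦ norm_ne_zero_iff.2 (hy0 z)).smul hyc).subtype_mk _
  have hγ0 (x) : γ (x, 0) = p := by
    ext
    simp [γ, y]
  obtain ⟨v, hv⟩ : ∃ v, P p v ≠ 0 := by
    by_contra! h
    exact hp (ContinuousLinearMap.ext h)
  obtain ⟨s, hs, h⟩ := exists_continuous_fixed_of_homotopy (H := P ∘ γ) (hP.comp hγ)
    (fun z ↦ hid _) hv fun x ↦ by simp only [Function.comp_apply, hγ0, hid]
  refine ⟨fun x ↦ P x (s x), hP.clm_apply hs, fun x ↦ hid _ _, fun x hx ↦ ?_⟩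
  have hγ1 : γ (x, 1) = x := by
    ext
    simp [γ, y, κ, abs_of_nonneg hx]
  have := h x
  simp only [Function.comp_apply, hγ1] at this
  exact this.1.trans_ne this.2

open Metric in
/-- The tangent bundle of an even-dimensional sphere has no two disjoint nonzero subbundles; they
are given here as the ranges of continuous families of projections. -/
theorem false_of_tangent_projections (hodd : Odd (finrank ℝ E))
    {P Q : sphere (0 : E) 1 → E →L[ℝ] E} (hP : Continuous P) (hQ : Continuous Q)
    (hPP : ∀ x v, P x (P x v) = P x v) (hQQ : ∀ x v, Q x (Q x v) = Q x v)
    (hPQ : ∀ x v, P x (Q x v) = 0) (hPt : ∀ x v, inner ℝ (P x v) (x : E) = 0)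
    (hQt : ∀ x v, inner ℝ (Q x v) (x : E) = 0) (hP0 : ∀ x, P x ≠ 0) (hQ0 : ∀ x, Q x ≠ 0) :
    False := by
  have : Nontrivial E := nontrivial_of_finrank_pos hodd.pos
  obtain ⟨p, hp⟩ := NormedSpace.sphere_nonempty (x := (0 : E)).2 zero_le_one
  obtain ⟨s, hs, hPs, hs0⟩ :=
    exists_continuous_fixed_ne_zero_on_hemisphere hP hPP (hP0 ⟨p, hp⟩)
  obtain ⟨w, hw, hQw, hw0⟩ :=
    exists_continuous_fixed_ne_zero_on_hemisphere hQ hQQ (hQ0 (-⟨p, hp⟩))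
  obtain ⟨x, hx⟩ := exists_eq_zero_of_odd_finrank hodd (hs.add hw) fun x ↦ by
    rw [Pi.add_apply, inner_add_left, ← hPs, ← hQw, hPt, hQt, add_zero]
  rw [Pi.add_apply] at hx
  have hsx : s x = 0 := by
    have := congrArg (P x) hx
    rwa [map_add, hPs, ← hQw, hPQ, add_zero, map_zero] at this
  have hwx : w x = 0 := by rwa [hsx, zero_add] at hx
  rcases le_total 0 (inner ℝ (x : E) p) with h | h
  · exact hs0 x h hsx
  · exact hw0 x (by simpa using h) hwx

end

section

variable {E : Type*} [NormedAddCommGroup E] [InnerProductSpace ℝ E]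

open Metric Function
open scoped ContDiff

/-- A map into the sphere is `C^m` on a set as soon as it is so as a map into the ambient space. -/
theorem contMDiffOn_sphere_of_coe {m : ℕ∞ω} {F : Type*} [NormedAddCommGroup F] [NormedSpace ℝ F]
    {H : Type*} [TopologicalSpace H] {I : ModelWithCorners ℝ F H} {M : Type*} [TopologicalSpace M]
    [ChartedSpace H M] [IsManifold I m M] {n : ℕ} [Fact (finrank ℝ E = n + 1)]
    {f : M → sphere (0 : E) 1} {s : Set M} (hf : ContMDiffOn I 𝓘(ℝ, E) m (fun x ↦ (f x : E)) s) :
    ContMDiffOn I (𝓡 n) m f s := by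
  rw [contMDiffOn_iff_target]
  refine ⟨Topology.IsInducing.subtypeVal.continuousOn_iff.2 hf.continuousOn, ?_⟩
  intro v
  let U : _ ≃ₗᵢ[ℝ] _ :=
    (OrthonormalBasis.fromOrthogonalSpanSingleton (𝕜 := ℝ)
        n (ne_zero_of_mem_unit_sphere (-v))).repr
  have h : ContDiffOn ℝ ω U Set.univ := U.contDiff.contDiffOn
  have H₁ := (h.comp_inter contDiffOn_stereoToFun).contMDiffOn
  convert! (H₁.of_le le_top).comp' hf using 1
  ext x
  have hfxv : (f x : E) = -↑v ↔ inner ℝ (f x : E) (-(v : E)) = 1 := by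
    have hfx : ‖(f x : E)‖ = 1 := by simp
    rw [inner_eq_one_iff_of_norm_eq_one hfx]
    exact norm_eq_of_mem_sphere (-v)
  simp [chartAt, ChartedSpace.chartAt, Subtype.ext_iff, hfxv, real_inner_comm]

theorem exists_contMDiffOn_sphere_retraction {n : ℕ} [Fact (finrank ℝ E = n + 1)] :
    ∃ r : E → sphere (0 : E) 1, (∀ x : sphere (0 : E) 1, r x = x) ∧
      ContMDiffOn 𝓘(ℝ, E) (𝓡 n) 1 r {0}ᶜ := by
  classical
  have : Nontrivial E := nontrivial_of_finrank_pos (R := ℝ) <| by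
    rw [Fact.out (p := finrank ℝ E = n + 1)]
    exact n.succ_pos
  obtain ⟨p, hp⟩ := NormedSpace.sphere_nonempty (x := (0 : E)).2 zero_le_one
  let r : E → sphere (0 : E) 1 := fun y ↦ if hy : y = 0 then ⟨p, hp⟩ else
    ⟨‖y‖⁻¹ • y, by simp [norm_smul, norm_ne_zero_iff.2 hy]⟩
  refine ⟨r, fun x ↦ ?_, contMDiffOn_sphere_of_coe ?_⟩
  · ext
    simp [r, ne_zero_of_mem_unit_sphere x]
  · have h : ContDiffOn ℝ 1 (fun y : E ↦ ‖y‖⁻¹ • y) {0}ᶜ := fun y hy ↦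
      (((contDiffAt_norm ℝ hy).inv (norm_ne_zero_iff.2 hy)).smul contDiffAt_id).contDiffWithinAt
    refine h.contMDiffOn.congr fun y hy ↦ ?_
    have hy : y ≠ 0 := hy
    simp [r, hy]

/-- The differentials `j` of the inclusion of the sphere and `ρ` of the radial retraction, as maps
between the model space of the sphere and the ambient space. -/
theorem exists_tangent_coordinates {n : ℕ} [Fact (finrank ℝ E = n + 1)] :
    ∃ (j : sphere (0 : E) 1 → EuclideanSpace ℝ (Fin n) →L[ℝ] E)
      (ρ : sphere (0 : E) 1 → E →L[ℝ] EuclideanSpace ℝ (Fin n)),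
      (∀ x v, ρ x (j x v) = v) ∧ (∀ x v, inner ℝ (j x v) (x : E) = 0) ∧
      (∀ v, Continuous fun x ↦
        (TotalSpace.mk x (ρ x v) : TangentBundle (𝓡 n) (sphere (0 : E) 1))) ∧
      Continuous fun p : TangentBundle (𝓡 n) (sphere (0 : E) 1) ↦ j p.proj p.2 := by
  obtain ⟨r, hr, hrs⟩ := exists_contMDiffOn_sphere_retraction (E := E) (n := n)
  have hx0 (x : sphere (0 : E) 1) : (x : E) ∈ ({0}ᶜ : Set E) := ne_zero_of_mem_unit_sphere x
  have hopen : IsOpen ({0}ᶜ : Set E) := isOpen_compl_singleton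
  have hι : ContMDiff (𝓡 n) 𝓘(ℝ, E) 1 ((↑) : sphere (0 : E) 1 → E) := contMDiff_coe_sphere
  refine ⟨fun x ↦ mfderiv (𝓡 n) 𝓘(ℝ, E) ((↑) : sphere (0 : E) 1 → E) x,
    fun x ↦ mfderivWithin 𝓘(ℝ, E) (𝓡 n) r {0}ᶜ x, fun x v ↦ ?_, fun x v ↦ ?_, fun v ↦ ?_, ?_⟩
  · have hrd : MDifferentiableAt 𝓘(ℝ, E) (𝓡 n) r (x : E) :=
      ((hrs x (hx0 x)).contMDiffAt (hopen.mem_nhds (hx0 x))).mdifferentiableAt one_ne_zero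
    have h1 := mfderiv_comp x hrd (hι.mdifferentiableAt one_ne_zero)
    have h2 : r ∘ ((↑) : sphere (0 : E) 1 → E) = id := funext hr
    rw [h2, mfderiv_id] at h1
    have h3 : mfderivWithin 𝓘(ℝ, E) (𝓡 n) r {0}ᶜ (x : E) = mfderiv 𝓘(ℝ, E) (𝓡 n) r (x : E) :=
      mfderivWithin_of_mem_nhds (hopen.mem_nhds (hx0 x))
    rw [← h3] at h1
    exact (DFunLike.congr_fun h1 v).symm
  · have h1 := range_mvfderiv_subtypeVal (n := n) x
    have h2 := h1.le (LinearMap.mem_range_self _ v)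
    exact (real_inner_comm _ _).trans (Submodule.mem_orthogonal_singleton_iff_inner_right.1 h2)
  · have h1 := hrs.continuousOn_tangentMapWithin (le_refl 1) hopen.uniqueMDiffOn
    have h2 : Continuous fun x : sphere (0 : E) 1 ↦
        (TotalSpace.mk (x : E) v : TangentBundle 𝓘(ℝ, E) E) :=
      (tangentBundleModelSpaceHomeomorph 𝓘(ℝ, E)).symm.continuous.comp
        (continuous_subtype_val.prodMk continuous_const)
    refine (h1.comp_continuous h2 fun x ↦ hx0 x).congr fun x ↦ ?_
    have h3 (y : sphere (0 : E) 1) (hy : y = x) (u : EuclideanSpace ℝ (Fin n)) :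
        (TotalSpace.mk y u : TangentBundle (𝓡 n) (sphere (0 : E) 1)) = TotalSpace.mk x u := by
      subst hy
      rfl
    exact h3 _ (hr x) _
  · exact continuous_snd.comp ((tangentBundleModelSpaceHomeomorph 𝓘(ℝ, E)).continuous.comp
      (hι.continuous_tangentMap le_rfl))

end

section

variable {E : Type*} [NormedAddCommGroup E] [InnerProductSpace ℝ E]

open Metric in
/-- The tangent bundle of an even-dimensional sphere has no continuous involution with both
eigenvalues `1` and `-1` at every point. -/
theorem false_of_tangent_involution {n : ℕ} [Fact (finrank ℝ E = n + 1)] (hn : Even n)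
    (i : sphere (0 : E) 1 → EuclideanSpace ℝ (Fin n) →ₗ[ℝ] EuclideanSpace ℝ (Fin n))
    (hi : Continuous fun p : TangentBundle (𝓡 n) (sphere (0 : E) 1) ↦
      (TotalSpace.mk p.proj (i p.proj p.2) : TangentBundle (𝓡 n) (sphere (0 : E) 1)))
    (hii : ∀ x v, i x (i x v) = v) (h1 : ∀ x, ∃ u ≠ 0, i x u = u) (h2 : ∀ x, ∃ u ≠ 0, i x u = -u) :
    False := by
  have hE : finrank ℝ E = n + 1 := Fact.out
  have : FiniteDimensional ℝ E := .of_finrank_pos (hE ▸ n.succ_pos)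
  obtain ⟨j, ρ, hρj, hj, hρc, hjc⟩ := exists_tangent_coordinates (E := E) (n := n)
  have hj0 {x u} (hu : u ≠ 0) : j x u ≠ 0 := fun h ↦ hu <| by rw [← hρj x u, h, map_zero]
  let A : sphere (0 : E) 1 → E →L[ℝ] E := fun x ↦ j x ∘L (i x).toContinuousLinearMap ∘L ρ x
  let B : sphere (0 : E) 1 → E →L[ℝ] E := fun x ↦ j x ∘L ρ x
  have hA : Continuous A := continuous_clm_apply.2 fun v ↦ hjc.comp (hi.comp (hρc v))
  have hB : Continuous B := continuous_clm_apply.2 fun v ↦ hjc.comp (hρc v)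
  have hAA (x v) : A x (A x v) = B x v := by simp [A, B, hρj, hii]
  have hAB (x v) : A x (B x v) = A x v := by simp [A, B, hρj]
  have hBA (x v) : B x (A x v) = A x v := by simp [A, B, hρj]
  have hBB (x v) : B x (B x v) = B x v := by simp [B, hρj]
  refine false_of_tangent_projections (hE ▸ hn.add_one)
    (P := fun x ↦ (2⁻¹ : ℝ) • (B x + A x)) (Q := fun x ↦ (2⁻¹ : ℝ) • (B x - A x))
    ((hB.add hA).const_smul (2⁻¹ : ℝ) :) ((hB.sub hA).const_smul (2⁻¹ : ℝ) :)
    (fun x v ↦ ?_) (fun x v ↦ ?_) (fun x v ↦ ?_) (fun x v ↦ ?_) (fun x v ↦ ?_)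
    (fun x h ↦ ?_) fun x h ↦ ?_
  · simp only [smul_apply, add_apply, map_smul, map_add, hAA, hAB, hBA, hBB]
    module
  · simp only [smul_apply, sub_apply, map_smul, map_sub, hAA, hAB, hBA, hBB]
    module
  · simp only [smul_apply, add_apply, sub_apply, map_smul, map_sub, hAA, hAB, hBA, hBB]
    module
  · simp [A, B, inner_smul_left, inner_add_left, hj]
  · simp [A, B, inner_smul_left, inner_sub_left, hj]
  · obtain ⟨u, hu, hiu⟩ := h1 x
    have h3 : (2⁻¹ : ℝ) • (B x (j x u) + A x (j x u)) = j x u := by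
      simp only [A, B, ContinuousLinearMap.comp_apply, LinearMap.coe_toContinuousLinearMap', hρj,
        hiu]
      module
    exact hj0 hu (h3.symm.trans (DFunLike.congr_fun h (j x u)))
  · obtain ⟨u, hu, hiu⟩ := h2 x
    have h3 : (2⁻¹ : ℝ) • (B x (j x u) - A x (j x u)) = j x u := by
      simp only [A, B, ContinuousLinearMap.comp_apply, LinearMap.coe_toContinuousLinearMap', hρj,
        hiu, map_neg]
      module
    exact hj0 hu (h3.symm.trans (DFunLike.congr_fun h (j x u)))

end

theorem exists_ne_zero_of_finrank_eigenspace_pos {K V : Type*} [Field K] [AddCommGroup V]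
    [Module K V] {f : End K V} {μ : K} (h : 0 < finrank K (f.eigenspace μ)) :
    ∃ u ≠ 0, f u = μ • u := by
  have : Nontrivial (f.eigenspace μ) := nontrivial_of_finrank_pos h
  obtain ⟨u, hu⟩ := exists_ne (0 : f.eigenspace μ)
  exact ⟨u, fun h0 ↦ hu (Subtype.ext h0), End.mem_eigenspace_iff.1 u.2⟩

/-- The even-dimensional sphere `S^{2n}` (for `n ≥ 1`) does not admit an almost
para-complex structure: there is no continuous `(1,1)`-tensor `I` with `I² = id` whose
`(+1)`- and `(−1)`-eigenspaces are both `n`-dimensional at every point; equivalently,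
the tangent bundle of `S^{2n}` cannot be written as a Whitney sum of two rank-`n`
subbundles. -/
theorem sphere_no_almost_paracomplex (n : ℕ) (hn : 1 ≤ n)
    [Fact (finrank ℝ (EuclideanSpace ℝ (Fin (2 * n + 1))) = 2 * n + 1)] :
    ¬ ∃ I : ∀ x : Metric.sphere (0 : EuclideanSpace ℝ (Fin (2 * n + 1))) 1,
        TangentSpace (𝓡 (2 * n)) x →ₗ[ℝ] TangentSpace (𝓡 (2 * n)) x,
      Continuous (fun p : TangentBundle (𝓡 (2 * n))
            (Metric.sphere (0 : EuclideanSpace ℝ (Fin (2 * n + 1))) 1) =>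
          (TotalSpace.mk p.proj (I p.proj p.2) : TangentBundle (𝓡 (2 * n))
            (Metric.sphere (0 : EuclideanSpace ℝ (Fin (2 * n + 1))) 1))) ∧
      (∀ x, (I x) ∘ₗ (I x) = LinearMap.id) ∧
      (∀ x, finrank ℝ ↥(Module.End.eigenspace (I x : Module.End ℝ (TangentSpace (𝓡 (2 * n)) x)) 1) = n) ∧
      (∀ x, finrank ℝ ↥(Module.End.eigenspace (I x : Module.End ℝ (TangentSpace (𝓡 (2 * n)) x)) (-1)) = n) := by
  rintro ⟨I, hc, hI, h1, h2⟩
  refine false_of_tangent_involution (even_two_mul n) I hc (fun x ↦ DFunLike.congr_fun (hI x))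
    (fun x ↦ ?_) fun x ↦ ?_
  · obtain ⟨u, hu, h⟩ := exists_ne_zero_of_finrank_eigenspace_pos (hn.trans_eq (h1 x).symm)
    exact ⟨u, hu, h.trans (one_smul ℝ u)⟩
  · obtain ⟨u, hu, h⟩ := exists_ne_zero_of_finrank_eigenspace_pos (hn.trans_eq (h2 x).symm)
    exact ⟨u, hu, h.trans (neg_one_smul ℝ u)⟩
end

section
/- In the quadratic extension 𝔡 = 𝔰𝔩(2,ℝ) ⊕ 𝔰𝔩(2,ℝ)* with involution θ(α+x) = σ*(α) + σ(x), where σ = diag(1,−1,−1), let 𝔥 = span{e₁,η₁} and 𝔫 = span{e₂,e₃,η₂,η₃} be the ±1-eigenspaces of θ. Then the endomorphism J := ad_Z of 𝔫, where Z = e₁ − cη₁, satisfies J² = id on 𝔫 and ⟨JX,Y⟩ + ⟨X,JY⟩ = 0 for all X,Y ∈ 𝔫; hence (𝔡, 𝔥, θ) with J and ⟨,⟩|_𝔫 is a non-semisimple para-Hermitian symmetric system. -/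
open Finset

/-- The quadratic extension `𝔡 = 𝔰𝔩(2,ℝ) ⊕ 𝔰𝔩(2,ℝ)*`, encoded by coordinates: the
first factor carries the coordinates with respect to the basis `{e₁,e₂,e₃}` of
`𝔰𝔩(2,ℝ)` (with `[e₁,e₂] = e₃`, `[e₁,e₃] = e₂`, `[e₂,e₃] = e₁`), the second the
coordinates with respect to the dual basis `{η₁,η₂,η₃}`. -/
abbrev Dalg := (Fin 3 → ℝ) × (Fin 3 → ℝ)

/-- The bracket of `𝔰𝔩(2,ℝ)` in the basis `{e₁,e₂,e₃}`. -/
def slBr (u v : Fin 3 → ℝ) : Fin 3 → ℝ :=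
  ![u 1 * v 2 - u 2 * v 1, u 0 * v 2 - u 2 * v 0, u 0 * v 1 - u 1 * v 0]

/-- The coadjoint action terms `[ηᵢ,eⱼ]`: `[η₁,e₂] = η₃`, `[η₁,e₃] = −η₂`,
`[η₂,e₁] = η₃`, `[η₂,e₃] = −η₁`, `[η₃,e₁] = η₂`, `[η₃,e₂] = −η₁`. -/
def coadBr (a v : Fin 3 → ℝ) : Fin 3 → ℝ :=
  ![-(a 1 * v 2) - a 2 * v 1, -(a 0 * v 2) + a 2 * v 0, a 0 * v 1 + a 1 * v 0]

/-- The bracket of the quadratic extension `𝔡`: `[e₁,e₂] = e₃ + cη₃`,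
`[e₁,e₃] = e₂ − cη₂`, `[e₂,e₃] = e₁ + cη₁`, together with the coadjoint action of
`𝔰𝔩(2,ℝ)` on `𝔰𝔩(2,ℝ)*`, and `𝔰𝔩(2,ℝ)*` abelian. -/
def dBr (c : ℝ) (x y : Dalg) : Dalg :=
  (slBr x.1 y.1,
    c • ![x.1 1 * y.1 2 - x.1 2 * y.1 1, -(x.1 0 * y.1 2 - x.1 2 * y.1 0),
        x.1 0 * y.1 1 - x.1 1 * y.1 0]
      + coadBr x.2 y.1 - coadBr y.2 x.1)

/-- The symmetric bilinear form `⟨α₁+x₁, α₂+x₂⟩ = α₁(x₂) + α₂(x₁)` on `𝔡`. -/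
def dForm (x y : Dalg) : ℝ := (∑ i, x.2 i * y.1 i) + (∑ i, y.2 i * x.1 i)

/-- The element `Z = e₁ − cη₁ ∈ 𝔥 = span{e₁,η₁}`. -/
def Zelt (c : ℝ) : Dalg := (![1, 0, 0], ![-c, 0, 0])

/-- Membership in `𝔫 = span{e₂,e₃,η₂,η₃}`, the `(−1)`-eigenspace of the involution
`θ(α+x) = σ*(α) + σ(x)` with `σ = diag(1,−1,−1)`. -/
def memNd (X : Dalg) : Prop := X.1 0 = 0 ∧ X.2 0 = 0

/-- In the quadratic extension `𝔡 = 𝔰𝔩(2,ℝ) ⊕ 𝔰𝔩(2,ℝ)*` with involution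
`θ(α+x) = σ*(α) + σ(x)`, `σ = diag(1,−1,−1)`, let `𝔥 = span{e₁,η₁}` and
`𝔫 = span{e₂,e₃,η₂,η₃}` be the `±1`-eigenspaces of `θ`.  Then `J = ad_Z`,
`Z = e₁ − cη₁`, preserves `𝔫`, satisfies `J² = id` on `𝔫` and
`⟨JX,Y⟩ + ⟨X,JY⟩ = 0` for all `X,Y ∈ 𝔫`; hence `(𝔡,𝔥,θ)` with `J` and `⟨,⟩|_𝔫`
is a (non-semisimple) para-Hermitian symmetric system. -/
theorem dalg_paraHermitian_symmetric_system (c : ℝ) (hc : c ≠ 0) :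
    (∀ X : Dalg, memNd X → memNd (dBr c (Zelt c) X)) ∧
    (∀ X : Dalg, memNd X → dBr c (Zelt c) (dBr c (Zelt c) X) = X) ∧
    (∀ X Y : Dalg, memNd X → memNd Y →
      dForm (dBr c (Zelt c) X) Y + dForm X (dBr c (Zelt c) Y) = 0) := by
  refine ⟨?_, ?_, ?_⟩
  · rintro ⟨x, a⟩ ⟨hx, ha⟩
    simp_all [memNd, dBr, Zelt, slBr, coadBr]
  · rintro ⟨x, a⟩ ⟨hx, ha⟩
    ext i <;> fin_cases i <;> simp_all [dBr, Zelt, slBr, coadBr]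
  · rintro ⟨x, a⟩ ⟨y, b⟩ ⟨hx, ha⟩ ⟨hy, hb⟩
    simp_all [dForm, dBr, Zelt, slBr, coadBr, Fin.sum_univ_three]
    ring
end
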